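/- For any 0 < ε ≤ 1/2 there exist constants C(ε), c(ε) > 0 such that if m ≥ C(ε) n, then with probability at least 1 − 3 exp(−c(ε) m), the uniform lower bound (1/m) Σ_{j=1}^m (a_j^T u)^4 ≥ 3 − ε holds for all unit vectors u ∈ R^n. -/

import Mathlib

open MeasureTheory ProbabilityTheory

noncomputable def stdGaussianMat (m n : ℕ) : Measure (Fin m → Fin n → ℝ) :=
  Measure.pi fun _ => Measure.pi fun _ => gaussianReal 0 1

/- Replace `t ↦ t ^ 4` by a bounded continuous minorant `f` with nearly the same Gaussian mean, and
each direction `u` by the uniform law on the ball of radius `δ` about `u`. With respect to the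
uniform law on the ball of radius `1 + δ` about `0` these laws have density at most
`(1 + 1 / δ) ^ n`, so the supremum over `u` costs only `n / δ` in the exponent of Hoeffding's
inequality for the `m` independent rows, which is negligible once `m ≥ C n`. As the ball is
rotation invariant, `⟪a, w⟫` has second moment at most `δ ^ 2 * ‖a‖ ^ 2 / n` for `w` uniform on the
ball of radius `δ` about `0`; hence averaging changes `f ⟪a, u⟫` little as long as `‖a‖ ^ 2 ≤ R n`,
and discarding the other rows costs at most `B / R` in the mean, where `f ≤ B`, as
`𝔼 ‖a‖ ^ 2 = n`. -/

open Metric Module Set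
open scoped ENNReal NNReal RealInnerProductSpace

section PACBayes

variable {Ω Θ : Type*} [MeasurableSpace Ω] [MeasurableSpace Θ] {μ : Measure Ω} {π : Measure Θ}

lemma ofReal_exp_integral_le_lintegral [IsProbabilityMeasure μ] {Z : Ω → ℝ} (hZ : Integrable Z μ) :
    ENNReal.ofReal (Real.exp (∫ ω, Z ω ∂μ)) ≤ ∫⁻ ω, ENNReal.ofReal (Real.exp (Z ω)) ∂μ := by
  by_cases htop : ∫⁻ ω, ENNReal.ofReal (Real.exp (Z ω)) ∂μ = ∞
  · simp [htop]
  have hexp : Integrable (fun ω => Real.exp (Z ω)) μ :=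
    (lintegral_ofReal_ne_top_iff_integrable
      (Real.continuous_exp.comp_aestronglyMeasurable hZ.1)
      (ae_of_all _ fun ω => (Real.exp_pos _).le)).1 htop
  rw [← ofReal_integral_eq_lintegral_ofReal hexp (ae_of_all _ fun ω => (Real.exp_pos _).le)]
  exact ENNReal.ofReal_le_ofReal (convexOn_exp.map_integral_le Real.continuous_exp.continuousOn
    isClosed_univ (ae_of_all _ fun _ => mem_univ _) hZ hexp)

lemma measure_ofReal_exp_le_lintegral_lintegral_le [SFinite μ] [IsProbabilityMeasure π]
    {F : Ω → Θ → ℝ≥0∞} (hF : Measurable (Function.uncurry F)) (hF_le : ∀ θ, ∫⁻ ω, F ω θ ∂μ ≤ 1)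
    (s : ℝ) :
    μ {ω | ENNReal.ofReal (Real.exp s) ≤ ∫⁻ θ, F ω θ ∂π} ≤ ENNReal.ofReal (Real.exp (-s)) := by
  have hmean : ∫⁻ ω, ∫⁻ θ, F ω θ ∂π ∂μ ≤ 1 := by
    rw [lintegral_lintegral_swap hF.aemeasurable]
    simpa using lintegral_mono (μ := π) hF_le
  calc μ {ω | ENNReal.ofReal (Real.exp s) ≤ ∫⁻ θ, F ω θ ∂π}
      ≤ (∫⁻ ω, ∫⁻ θ, F ω θ ∂π ∂μ) / ENNReal.ofReal (Real.exp s) :=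
        meas_ge_le_lintegral_div hF.lintegral_prod_right'.aemeasurable
          (ENNReal.ofReal_pos.2 (Real.exp_pos s)).ne' ENNReal.ofReal_ne_top
    _ ≤ 1 / ENNReal.ofReal (Real.exp s) := ENNReal.div_le_div_right hmean _
    _ = ENNReal.ofReal (Real.exp (-s)) := by
        rw [one_div, ← ENNReal.ofReal_inv_of_pos (Real.exp_pos _), Real.exp_neg]

variable {ι : Type*} {ρ : ι → Measure Θ} [∀ i, IsProbabilityMeasure (ρ i)] {M : ℝ}

/- The supremum over the uncountable family `ρ` costs only `log M`: by Jensen's inequality each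
`exp (∫ θ, Z ω θ ∂ρ i)` is at most `M * ∫ θ, exp (Z ω θ) ∂π`, a bound independent of `i`. -/
theorem measure_exists_add_log_lt_integral_le [SFinite μ] [IsProbabilityMeasure π] (hM : 0 < M)
    (hρ : ∀ i, ρ i ≤ ENNReal.ofReal M • π) {Z : Ω → Θ → ℝ}
    (hZ : Measurable (Function.uncurry Z)) (hZρ : ∀ i ω, Integrable (Z ω) (ρ i))
    (hZ_exp : ∀ θ, ∫⁻ ω, ENNReal.ofReal (Real.exp (Z ω θ)) ∂μ ≤ 1) (s : ℝ) :
    μ {ω | ∃ i, s + Real.log M < ∫ θ, Z ω θ ∂ρ i} ≤ ENNReal.ofReal (Real.exp (-s)) := by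
  refine (measure_mono ?_).trans (measure_ofReal_exp_le_lintegral_lintegral_le (π := π)
    (F := fun ω θ => ENNReal.ofReal (Real.exp (Z ω θ))) hZ.exp.ennreal_ofReal hZ_exp s)
  rintro ω ⟨i, hi⟩
  have hM' : ENNReal.ofReal M ≠ 0 := (ENNReal.ofReal_pos.2 hM).ne'
  refine (ENNReal.mul_le_mul_iff_right hM' ENNReal.ofReal_ne_top).1 ?_
  calc ENNReal.ofReal M * ENNReal.ofReal (Real.exp s)
      = ENNReal.ofReal (Real.exp (s + Real.log M)) := by
        rw [← ENNReal.ofReal_mul hM.le, Real.exp_add, Real.exp_log hM, mul_comm]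
    _ ≤ ENNReal.ofReal (Real.exp (∫ θ, Z ω θ ∂ρ i)) := by gcongr
    _ ≤ ∫⁻ θ, ENNReal.ofReal (Real.exp (Z ω θ)) ∂ρ i := ofReal_exp_integral_le_lintegral (hZρ i ω)
    _ ≤ ∫⁻ θ, ENNReal.ofReal (Real.exp (Z ω θ)) ∂(ENNReal.ofReal M • π) :=
        lintegral_mono' (hρ i) le_rfl
    _ = ENNReal.ofReal M * ∫⁻ θ, ENNReal.ofReal (Real.exp (Z ω θ)) ∂π := lintegral_smul_measure _ _

section Hoeffding

variable {κ : Type*} [Fintype κ] {B : ℝ}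

lemma lintegral_exp_sum_integral_sub_le_one {Y : κ → Ω → ℝ} (hY : iIndepFun Y μ)
    (hY_meas : ∀ j, AEMeasurable (Y j) μ) (hYB : ∀ j, ∀ᵐ ω ∂μ, Y j ω ∈ Icc 0 B) (l : ℝ) :
    ∫⁻ ω, ENNReal.ofReal (Real.exp (l * ∑ j, (∫ ω', Y j ω' ∂μ - Y j ω)
      - Fintype.card κ * (l ^ 2 * B ^ 2 / 8))) ∂μ ≤ 1 := by
  have := hY.isProbabilityMeasure
  set c : ℝ := Fintype.card κ * (l ^ 2 * B ^ 2 / 8) with hc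
  have hsub : HasSubgaussianMGF (fun ω => ∑ j, (Y j ω - ∫ ω', Y j ω' ∂μ))
      (∑ _j : κ, (‖B - 0‖₊ / 2) ^ 2) μ :=
    .sum_of_iIndepFun (hY.comp (fun j y => y - ∫ ω', Y j ω' ∂μ) fun _ => by fun_prop)
      fun j _ => hasSubgaussianMGF_of_mem_Icc (hY_meas j) (hYB j)
  have hmgf : mgf (fun ω => ∑ j, (Y j ω - ∫ ω', Y j ω' ∂μ)) μ (-l) ≤ Real.exp c := by
    refine (hsub.mgf_le (-l)).trans_eq ?_
    simp only [sub_zero, Finset.sum_const, Finset.card_univ, nsmul_eq_mul, NNReal.coe_mul,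
      NNReal.coe_natCast, NNReal.coe_pow, NNReal.coe_div, coe_nnnorm, Real.norm_eq_abs, div_pow,
      sq_abs, NNReal.coe_ofNat, hc]
    ring_nf
  have hexp : ∀ ω, Real.exp (l * ∑ j, (∫ ω', Y j ω' ∂μ - Y j ω) - c)
      = Real.exp (-c) * Real.exp (-l * ∑ j, (Y j ω - ∫ ω', Y j ω' ∂μ)) := by
    intro ω
    have hneg : ∑ j, (∫ ω', Y j ω' ∂μ - Y j ω) = -∑ j, (Y j ω - ∫ ω', Y j ω' ∂μ) := by
      simp only [← Finset.sum_neg_distrib, neg_sub]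
    rw [← Real.exp_add, hneg]
    ring_nf
  simp_rw [hexp]
  rw [← ofReal_integral_eq_lintegral_ofReal ((hsub.integrable_exp_mul (-l)).const_mul _)
    (ae_of_all _ fun ω => by positivity), integral_const_mul, ENNReal.ofReal_le_one]
  calc Real.exp (-c) * mgf (fun ω => ∑ j, (Y j ω - ∫ ω', Y j ω' ∂μ)) μ (-l)
      ≤ Real.exp (-c) * Real.exp c := by gcongr
    _ = 1 := by rw [← Real.exp_add, neg_add_cancel, Real.exp_zero]

variable {𝓧 : Type*} [MeasurableSpace 𝓧] {X : κ → Ω → 𝓧} {h : 𝓧 → Θ → ℝ}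

lemma integrable_sum_integral_sub [SFinite μ] {ν : Measure Θ} [SFinite ν] {k : κ → Ω → Θ → ℝ}
    (hk : ∀ j, Integrable (Function.uncurry (k j)) (μ.prod ν)) {ω : Ω}
    (hkω : ∀ j, Integrable (k j ω) ν) :
    Integrable (fun θ => ∑ j, (∫ ω', k j ω' θ ∂μ - k j ω θ)) ν :=
  integrable_finsetSum _ fun j _ => (hk j).integral_prod_right.sub (hkω j)

lemma integral_sum_integral_sub [SFinite μ] {ν : Measure Θ} [SFinite ν] {k : κ → Ω → Θ → ℝ}
    (hk : ∀ j, Integrable (Function.uncurry (k j)) (μ.prod ν)) {ω : Ω}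
    (hkω : ∀ j, Integrable (k j ω) ν) :
    ∫ θ, ∑ j, (∫ ω', k j ω' θ ∂μ - k j ω θ) ∂ν
      = ∑ j, (∫ ω', ∫ θ, k j ω' θ ∂ν ∂μ - ∫ θ, k j ω θ ∂ν) := by
  have hmean : ∀ j, Integrable (fun θ => ∫ ω', k j ω' θ ∂μ) ν := fun j =>
    (hk j).integral_prod_right
  have hdev : ∀ j, Integrable (fun θ => ∫ ω', k j ω' θ ∂μ - k j ω θ) ν := fun j =>
    (hmean j).sub (hkω j)
  rw [integral_finsetSum _ fun j _ => hdev j]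
  congr! 1 with j
  rw [integral_sub (hmean j) (hkω j), integral_integral_swap (hk j)]

theorem measure_exists_lt_sum_integral_sub_le [IsProbabilityMeasure π] (hM : 0 < M)
    (hρ : ∀ i, ρ i ≤ ENNReal.ofReal M • π) (hX : iIndepFun X μ) (hX_meas : ∀ j, Measurable (X j))
    (hh : Measurable (Function.uncurry h)) (hhB : ∀ x θ, h x θ ∈ Icc 0 B) {l : ℝ} (hl : 0 < l)
    (s : ℝ) :
    μ {ω | ∃ i, Fintype.card κ * (l * B ^ 2 / 8) + (s + Real.log M) / l
        < ∑ j, (∫ ω', ∫ θ, h (X j ω') θ ∂ρ i ∂μ - ∫ θ, h (X j ω) θ ∂ρ i)}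
      ≤ ENNReal.ofReal (Real.exp (-s)) := by
  have := hX.isProbabilityMeasure
  have hhX : ∀ j, Measurable (Function.uncurry fun ω θ => h (X j ω) θ) := fun j =>
    hh.comp (((hX_meas j).comp measurable_fst).prodMk measurable_snd)
  have hint : ∀ i ω j, Integrable (h (X j ω)) (ρ i) := fun i ω j =>
    .of_mem_Icc 0 B hh.of_uncurry_left.aemeasurable (ae_of_all _ (hhB _))
  have hint_prod : ∀ i j, Integrable (Function.uncurry fun ω θ => h (X j ω) θ) (μ.prod (ρ i)) :=
    fun i j => .of_mem_Icc 0 B (hhX j).aemeasurable (ae_of_all _ fun _ => hhB _ _)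
  have hdev : ∀ i ω, Integrable
      (fun θ => l * ∑ j, (∫ ω', h (X j ω') θ ∂μ - h (X j ω) θ)) (ρ i) := fun i ω =>
    (integrable_sum_integral_sub (hint_prod i) (hint i ω)).const_mul l
  set c : ℝ := Fintype.card κ * (l ^ 2 * B ^ 2 / 8) with hc
  have hZ : Measurable (Function.uncurry fun ω θ =>
      l * ∑ j, (∫ ω', h (X j ω') θ ∂μ - h (X j ω) θ) - c) :=
    ((Finset.measurable_sum _ fun j _ =>
      ((hhX j).stronglyMeasurable.integral_prod_left'.measurable.comp measurable_snd).sub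
        (hhX j)).const_mul l).sub_const c
  have hZ_exp : ∀ θ, ∫⁻ ω, ENNReal.ofReal (Real.exp
      (l * ∑ j, (∫ ω', h (X j ω') θ ∂μ - h (X j ω) θ) - c)) ∂μ ≤ 1 := fun θ =>
    lintegral_exp_sum_integral_sub_le_one (Y := fun j ω => h (X j ω) θ)
      (hX.comp (fun _ x => h x θ) fun _ => hh.of_uncurry_right)
      (fun j => (hhX j).of_uncurry_right.aemeasurable) (fun j => ae_of_all _ fun ω => hhB _ θ) l
  refine (measure_mono ?_).trans (measure_exists_add_log_lt_integral_le hM hρ hZ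
    (fun i ω => (hdev i ω).sub (integrable_const c)) hZ_exp s)
  rintro ω ⟨i, hi⟩
  refine ⟨i, ?_⟩
  have hscale := mul_lt_mul_of_pos_left hi hl
  rw [mul_add, mul_div_cancel₀ _ hl.ne'] at hscale
  rw [integral_sub (hdev i ω) (integrable_const c), integral_const_mul,
    integral_sum_integral_sub (hint_prod i) (hint i ω), integral_const, probReal_univ, one_smul, hc]
  linarith

end Hoeffding

end PACBayes


section Cond

variable {α β : Type*} [MeasurableSpace α] [MeasurableSpace β] {μ : Measure α} {s t : Set α}

lemma measurePreserving_cond_preimage {ν : Measure β} {f : α → β} (hf : MeasurePreserving f μ ν)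
    {s : Set β} (hs : MeasurableSet s) : MeasurePreserving f (μ[|f ⁻¹' s]) (ν[|s]) := by
  have hrestrict := (hf.restrict_preimage hs).smul_measure (μ (f ⁻¹' s))⁻¹
  rw [hf.measure_preimage hs.nullMeasurableSet] at hrestrict
  rwa [ProbabilityTheory.cond, ProbabilityTheory.cond, hf.measure_preimage hs.nullMeasurableSet]

lemma cond_le_smul_cond (hst : s ⊆ t) (ht₀ : μ t ≠ 0) (ht : μ t ≠ ∞) :
    μ[|s] ≤ (μ t / μ s) • μ[|t] := by
  rw [ProbabilityTheory.cond, ProbabilityTheory.cond, smul_smul, ENNReal.div_eq_inv_mul,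
    mul_assoc, ENNReal.mul_inv_cancel ht₀ ht, mul_one]
  gcongr

lemma isProbabilityMeasure_cond_ball {γ : Type*} [PseudoMetricSpace γ] [ProperSpace γ]
    [MeasurableSpace γ] {ν : Measure γ} [ν.IsOpenPosMeasure] [IsFiniteMeasureOnCompacts ν] {x : γ}
    {δ : ℝ} (hδ : 0 < δ) : IsProbabilityMeasure (ν[|ball x δ]) :=
  cond_isProbabilityMeasure_of_finite (measure_ball_pos ν x hδ).ne' measure_ball_lt_top.ne

end Cond

section CondBall

variable {E : Type*} [NormedAddCommGroup E] [MeasurableSpace E] [BorelSpace E] {ν : Measure E}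

lemma ae_norm_le_cond_ball (δ : ℝ) : ∀ᵐ w ∂ν[|ball 0 δ], ‖w‖ ≤ δ := by
  filter_upwards [ae_cond_mem measurableSet_ball] with w hw
  exact (mem_ball_zero_iff.1 hw).le

lemma measurePreserving_add_left_cond_ball [ν.IsAddLeftInvariant] (u : E) (δ : ℝ) :
    MeasurePreserving (u + ·) (ν[|ball 0 δ]) (ν[|ball u δ]) := by
  simpa using measurePreserving_cond_preimage (measurePreserving_add_left ν u)
    (measurableSet_ball (x := u) (ε := δ))

variable [NormedSpace ℝ E] [FiniteDimensional ℝ E] [ν.IsAddHaarMeasure] {u : E} {δ : ℝ}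

lemma cond_ball_le_smul_cond_ball (hδ : 0 < δ) (hu : ‖u‖ ≤ 1) :
    ν[|ball u δ] ≤ ENNReal.ofReal ((1 + 1 / δ) ^ finrank ℝ E) • ν[|ball 0 (1 + δ)] := by
  have hsub : ball u δ ⊆ ball 0 (1 + δ) :=
    ball_subset_ball' (by rw [dist_zero_right]; linarith)
  have hratio : ν (ball 0 (1 + δ)) / ν (ball u δ)
      = ENNReal.ofReal ((1 + 1 / δ) ^ finrank ℝ E) := by
    rw [Measure.addHaar_ball_of_pos ν _ (by positivity), Measure.addHaar_ball_of_pos ν _ hδ,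
      ENNReal.mul_div_mul_right _ _ (measure_ball_pos ν 0 one_pos).ne' measure_ball_lt_top.ne,
      ← ENNReal.ofReal_div_of_pos (by positivity), ← div_pow]
    congr 2
    field_simp
    ring
  rw [← hratio]
  exact cond_le_smul_cond hsub (measure_ball_pos ν 0 (by positivity)).ne' measure_ball_lt_top.ne

end CondBall

section Isotropy

variable {E : Type*} [NormedAddCommGroup E] [InnerProductSpace ℝ E] [MeasurableSpace E]
  [BorelSpace E] {σ : Measure E}

lemma integral_sq_inner_eq_of_norm_eq (hσ : ∀ e : E ≃ₗᵢ[ℝ] E, MeasurePreserving e σ σ) {x y : E}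
    (hxy : ‖x‖ = ‖y‖) : ∫ w, ⟪x, w⟫ ^ 2 ∂σ = ∫ w, ⟪y, w⟫ ^ 2 ∂σ := by
  set e := (ℝ ∙ (x - y))ᗮ.reflection
  have hex : e x = y := Submodule.reflection_sub hxy
  calc ∫ w, ⟪x, w⟫ ^ 2 ∂σ
      = ∫ w, ⟪e x, e w⟫ ^ 2 ∂σ := by simp only [LinearIsometryEquiv.inner_map_map]
    _ = ∫ w, ⟪y, w⟫ ^ 2 ∂σ := by
        rw [hex, (hσ e).integral_comp e.toHomeomorph.measurableEmbedding fun w => ⟪y, w⟫ ^ 2]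

variable [FiniteDimensional ℝ E]

lemma finrank_mul_integral_sq_inner (hσ : ∀ e : E ≃ₗᵢ[ℝ] E, MeasurePreserving e σ σ)
    (hint : Integrable (fun w => ‖w‖ ^ 2) σ) (x : E) :
    finrank ℝ E * ∫ w, ⟪x, w⟫ ^ 2 ∂σ = ‖x‖ ^ 2 * ∫ w, ‖w‖ ^ 2 ∂σ := by
  set b := stdOrthonormalBasis ℝ E
  have hint_b : ∀ i, Integrable (fun w => ⟪b i, w⟫ ^ 2) σ := fun i =>
    hint.mono' (by fun_prop) (ae_of_all _ fun w => by
      rw [Real.norm_of_nonneg (sq_nonneg _), ← b.sum_sq_inner_right w]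
      exact Finset.single_le_sum (f := fun i => ⟪b i, w⟫ ^ 2) (fun _ _ => sq_nonneg _)
        (Finset.mem_univ i))
  have hnorm : ∀ i, ‖x‖ = ‖‖x‖ • b i‖ := fun i => by simp [norm_smul]
  calc finrank ℝ E * ∫ w, ⟪x, w⟫ ^ 2 ∂σ
      = ∑ i, ∫ w, ⟪‖x‖ • b i, w⟫ ^ 2 ∂σ := by
        simp_rw [← integral_sq_inner_eq_of_norm_eq hσ (hnorm _)]
        rw [Finset.sum_const, Finset.card_univ, Fintype.card_fin, nsmul_eq_mul]
    _ = ‖x‖ ^ 2 * ∑ i, ∫ w, ⟪b i, w⟫ ^ 2 ∂σ := by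
        simp only [real_inner_smul_left, mul_pow, integral_const_mul, Finset.mul_sum]
    _ = ‖x‖ ^ 2 * ∫ w, ‖w‖ ^ 2 ∂σ := by
        rw [← integral_finsetSum _ fun i _ => hint_b i]
        simp only [b.sum_sq_inner_right]

lemma integrable_sq_inner_cond_ball {δ : ℝ} (hδ : 0 < δ) (x : E) :
    Integrable (fun w => ⟪x, w⟫ ^ 2) (volume[|ball (0 : E) δ]) := by
  have : IsProbabilityMeasure (volume[|ball (0 : E) δ]) := isProbabilityMeasure_cond_ball hδ
  refine .of_mem_Icc 0 ((‖x‖ * δ) ^ 2) (by fun_prop) ?_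
  filter_upwards [ae_norm_le_cond_ball δ] with w hw
  have hle : |⟪x, w⟫| ≤ ‖x‖ * δ := (abs_real_inner_le_norm x w).trans (by gcongr)
  exact ⟨sq_nonneg _, sq_le_sq' (neg_le_of_abs_le hle) (le_of_abs_le hle)⟩

lemma integral_sq_inner_cond_ball_le {δ : ℝ} (hδ : 0 < δ) (x : E) :
    finrank ℝ E * ∫ w, ⟪x, w⟫ ^ 2 ∂volume[|ball (0 : E) δ] ≤ δ ^ 2 * ‖x‖ ^ 2 := by
  have : IsProbabilityMeasure (volume[|ball (0 : E) δ]) := isProbabilityMeasure_cond_ball hδ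
  have hrotation : ∀ e : E ≃ₗᵢ[ℝ] E,
      MeasurePreserving e (volume[|ball (0 : E) δ]) (volume[|ball (0 : E) δ]) := fun e => by
    simpa using measurePreserving_cond_preimage e.measurePreserving
      (measurableSet_ball (x := (0 : E)) (ε := δ))
  have hle : ∀ᵐ w ∂volume[|ball (0 : E) δ], ‖w‖ ^ 2 ≤ δ ^ 2 := by
    filter_upwards [ae_norm_le_cond_ball δ] with w hw
    gcongr
  have hint : Integrable (fun w : E => ‖w‖ ^ 2) (volume[|ball (0 : E) δ]) :=
    .of_mem_Icc 0 (δ ^ 2) (by fun_prop) (hle.mono fun w hw => ⟨by positivity, hw⟩)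
  rw [finrank_mul_integral_sq_inner hrotation hint, mul_comm]
  gcongr
  simpa using integral_mono_ae hint (integrable_const _) hle

end Isotropy

section Ridge

variable {E : Type*} [NormedAddCommGroup E] [InnerProductSpace ℝ E]
  {f : ℝ → ℝ} {B r : ℝ}

/-- The ridge function `x ↦ f ⟪x, w⟫` set to zero outside the ball `‖x‖ ^ 2 ≤ r`. The truncation
keeps the average of `f ⟪x, w⟫` over `w` near `u` close to `f ⟪x, u⟫`, uniformly in `x`. -/
noncomputable def truncatedRidge (f : ℝ → ℝ) (r : ℝ) (x w : E) : ℝ :=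
  {x : E | ‖x‖ ^ 2 ≤ r}.indicator (fun x => f ⟪x, w⟫) x

lemma truncatedRidge_mem_Icc (hfB : ∀ t, f t ∈ Icc 0 B) (x w : E) :
    truncatedRidge f r x w ∈ Icc 0 B := by
  by_cases hx : ‖x‖ ^ 2 ≤ r
  · simpa [truncatedRidge, hx] using hfB _
  · simpa [truncatedRidge, hx] using (hfB 0).1.trans (hfB 0).2

lemma truncatedRidge_le (hf : ∀ t, 0 ≤ f t) (x w : E) : truncatedRidge f r x w ≤ f ⟪x, w⟫ :=
  indicator_le_self' (fun _ _ => hf _) x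

lemma sub_truncatedRidge_le (hr : 0 < r) (hfB : ∀ t, f t ∈ Icc 0 B) (x w : E) :
    f ⟪x, w⟫ - truncatedRidge f r x w ≤ B / r * ‖x‖ ^ 2 := by
  have hB : 0 ≤ B := (hfB 0).1.trans (hfB 0).2
  by_cases hx : ‖x‖ ^ 2 ≤ r
  · simpa [truncatedRidge, hx] using by positivity
  · calc f ⟪x, w⟫ - truncatedRidge f r x w = f ⟪x, w⟫ := by simp [truncatedRidge, hx]
      _ ≤ B / r * r := by rw [div_mul_cancel₀ _ hr.ne']; exact (hfB _).2
      _ ≤ B / r * ‖x‖ ^ 2 := by gcongr; exact (not_le.1 hx).le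

variable [MeasurableSpace E] [BorelSpace E]

lemma measurable_truncatedRidge [SecondCountableTopology E] (hf : Measurable f) :
    Measurable (Function.uncurry (truncatedRidge f r : E → E → ℝ)) := by
  have hset : MeasurableSet {p : E × E | ‖p.1‖ ^ 2 ≤ r} :=
    measurableSet_le (by fun_prop) measurable_const
  exact (hf.comp (measurable_fst.inner measurable_snd)).indicator hset

variable {Ω : Type*} [MeasurableSpace Ω] {μ : Measure Ω} {X : Ω → E}

lemma integrable_truncatedRidge [IsFiniteMeasure μ] [SecondCountableTopology E] (hf : Measurable f)
    (hfB : ∀ t, f t ∈ Icc 0 B) (hX : Measurable X) {U : Ω → E} (hU : Measurable U) :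
    Integrable (fun ω => truncatedRidge f r (X ω) (U ω)) μ :=
  .of_mem_Icc 0 B ((measurable_truncatedRidge hf).comp (hX.prodMk hU)).aemeasurable
    (ae_of_all _ fun _ => truncatedRidge_mem_Icc hfB _ _)

variable [IsProbabilityMeasure μ]

lemma integral_ridge_sub_integral_truncatedRidge_le [SecondCountableTopology E] (hr : 0 < r)
    (hf : Measurable f) (hfB : ∀ t, f t ∈ Icc 0 B) (hX : Measurable X)
    (hX_sq : Integrable (fun ω => ‖X ω‖ ^ 2) μ) (u : E) :
    ∫ ω, f ⟪X ω, u⟫ ∂μ - ∫ ω, truncatedRidge f r (X ω) u ∂μ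
      ≤ B / r * ∫ ω, ‖X ω‖ ^ 2 ∂μ := by
  have hridge : Integrable (fun ω => f ⟪X ω, u⟫) μ :=
    .of_mem_Icc 0 B (hf.comp (hX.inner_const)).aemeasurable (ae_of_all _ fun _ => hfB _)
  have htrunc : Integrable (fun ω => truncatedRidge f r (X ω) u) μ :=
    integrable_truncatedRidge hf hfB hX measurable_const
  rw [← integral_sub hridge htrunc, ← integral_const_mul]
  exact integral_mono (hridge.sub htrunc) (hX_sq.const_mul _) fun ω =>
    sub_truncatedRidge_le hr hfB _ _

variable [FiniteDimensional ℝ E] [Nontrivial E] {η K δ R : ℝ} {x u : E}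

lemma abs_integral_ridge_sub_le (hδ : 0 < δ) (hK : 0 ≤ K) (hf : Measurable f)
    (hfB : ∀ t, f t ∈ Icc 0 B) (hfK : ∀ s t, |f s - f t| ≤ η + K * (s - t) ^ 2)
    (hx : ‖x‖ ^ 2 ≤ R * finrank ℝ E) :
    |∫ w, f ⟪x, w⟫ ∂volume[|ball u δ] - f ⟪x, u⟫| ≤ η + K * (R * δ ^ 2) := by
  have : IsProbabilityMeasure (volume[|ball (0 : E) δ]) := isProbabilityMeasure_cond_ball hδ
  have hint : Integrable (fun w => f ⟪x, u + w⟫) (volume[|ball (0 : E) δ]) :=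
    .of_mem_Icc 0 B (hf.comp (by fun_prop)).aemeasurable (ae_of_all _ fun _ => hfB _)
  have hsq := integrable_sq_inner_cond_ball hδ x
  have hvar : ∫ w, ⟪x, w⟫ ^ 2 ∂volume[|ball (0 : E) δ] ≤ R * δ ^ 2 := by
    have hd : (0 : ℝ) < finrank ℝ E := mod_cast finrank_pos
    refine le_of_mul_le_mul_left ?_ hd
    calc finrank ℝ E * ∫ w, ⟪x, w⟫ ^ 2 ∂volume[|ball (0 : E) δ]
        ≤ δ ^ 2 * ‖x‖ ^ 2 := integral_sq_inner_cond_ball_le hδ x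
      _ ≤ δ ^ 2 * (R * finrank ℝ E) := by gcongr
      _ = finrank ℝ E * (R * δ ^ 2) := by ring
  calc |∫ w, f ⟪x, w⟫ ∂volume[|ball u δ] - f ⟪x, u⟫|
      = |∫ w, (f ⟪x, u + w⟫ - f ⟪x, u⟫) ∂volume[|ball (0 : E) δ]| := by
        rw [integral_sub hint (integrable_const _), integral_const, probReal_univ, one_smul,
          ← (measurePreserving_add_left_cond_ball u δ).integral_comp
            (measurableEmbedding_addLeft u) fun w => f ⟪x, w⟫]
    _ ≤ ∫ w, (η + K * ⟪x, w⟫ ^ 2) ∂volume[|ball (0 : E) δ] := by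
        rw [← Real.norm_eq_abs]
        refine norm_integral_le_of_norm_le ((integrable_const _).add (hsq.const_mul K))
          (ae_of_all _ fun w => ?_)
        simpa [inner_add_right] using hfK ⟪x, u + w⟫ ⟪x, u⟫
    _ = η + K * ∫ w, ⟪x, w⟫ ^ 2 ∂volume[|ball (0 : E) δ] := by
        rw [integral_add (integrable_const _) (hsq.const_mul K), integral_const_mul]
        simp
    _ ≤ η + K * (R * δ ^ 2) := by gcongr

lemma abs_integral_truncatedRidge_sub_le (hδ : 0 < δ) (hK : 0 ≤ K) (hR : 0 ≤ R)
    (hf : Measurable f) (hfB : ∀ t, f t ∈ Icc 0 B)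
    (hfK : ∀ s t, |f s - f t| ≤ η + K * (s - t) ^ 2) (x u : E) :
    |∫ w, truncatedRidge f (R * finrank ℝ E) x w ∂volume[|ball u δ]
      - truncatedRidge f (R * finrank ℝ E) x u| ≤ η + K * (R * δ ^ 2) := by
  have hη : 0 ≤ η := by simpa using hfK 0 0
  by_cases hx : ‖x‖ ^ 2 ≤ R * finrank ℝ E
  · simpa [truncatedRidge, hx] using abs_integral_ridge_sub_le hδ hK hf hfB hfK hx
  · simpa [truncatedRidge, hx] using by positivity

lemma integral_truncatedRidge_le_integral_integral_add (hδ : 0 < δ) (hK : 0 ≤ K) (hR : 0 ≤ R)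
    (hf : Measurable f) (hfB : ∀ t, f t ∈ Icc 0 B)
    (hfK : ∀ s t, |f s - f t| ≤ η + K * (s - t) ^ 2) (hX : Measurable X) (u : E) :
    ∫ ω, truncatedRidge f (R * finrank ℝ E) (X ω) u ∂μ
      ≤ ∫ ω, ∫ w, truncatedRidge f (R * finrank ℝ E) (X ω) w ∂volume[|ball u δ] ∂μ
        + (η + K * (R * δ ^ 2)) := by
  have : IsProbabilityMeasure (volume[|ball u δ]) := isProbabilityMeasure_cond_ball hδ
  have hmean : Integrable
      (fun ω => ∫ w, truncatedRidge f (R * finrank ℝ E) (X ω) w ∂volume[|ball u δ]) μ :=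
    (integrable_truncatedRidge hf hfB (hX.comp measurable_fst) measurable_snd).integral_prod_left
  calc ∫ ω, truncatedRidge f (R * finrank ℝ E) (X ω) u ∂μ
      ≤ ∫ ω, (∫ w, truncatedRidge f (R * finrank ℝ E) (X ω) w ∂volume[|ball u δ]
          + (η + K * (R * δ ^ 2))) ∂μ := by
        refine integral_mono (integrable_truncatedRidge hf hfB hX measurable_const)
          (hmean.add (integrable_const _)) fun ω => ?_
        linarith [(abs_le.1 (abs_integral_truncatedRidge_sub_le hδ hK hR hf hfB hfK (X ω) u)).1]
    _ = _ := by
        rw [integral_add hmean (integrable_const _), integral_const, probReal_univ, one_smul]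

lemma integral_ridge_sub_le (hδ : 0 < δ) (hK : 0 ≤ K) (hR : 0 < R) (hf : Measurable f)
    (hfB : ∀ t, f t ∈ Icc 0 B) (hfK : ∀ s t, |f s - f t| ≤ η + K * (s - t) ^ 2)
    (hX : Measurable X) (hX_sq : Integrable (fun ω => ‖X ω‖ ^ 2) μ)
    (hX_le : ∫ ω, ‖X ω‖ ^ 2 ∂μ ≤ finrank ℝ E) (u : E) (ω : Ω) :
    ∫ ω', f ⟪X ω', u⟫ ∂μ - f ⟪X ω, u⟫
      ≤ (∫ ω', ∫ w, truncatedRidge f (R * finrank ℝ E) (X ω') w ∂volume[|ball u δ] ∂μ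
        - ∫ w, truncatedRidge f (R * finrank ℝ E) (X ω) w ∂volume[|ball u δ])
        + (B / R + 2 * (η + K * (R * δ ^ 2))) := by
  have hd : (0 : ℝ) < finrank ℝ E := mod_cast finrank_pos
  have hB : 0 ≤ B := (hfB 0).1.trans (hfB 0).2
  have htruncate : ∫ ω', f ⟪X ω', u⟫ ∂μ
      - ∫ ω', truncatedRidge f (R * finrank ℝ E) (X ω') u ∂μ ≤ B / R :=
    calc ∫ ω', f ⟪X ω', u⟫ ∂μ - ∫ ω', truncatedRidge f (R * finrank ℝ E) (X ω') u ∂μ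
        ≤ B / (R * finrank ℝ E) * ∫ ω, ‖X ω‖ ^ 2 ∂μ :=
          integral_ridge_sub_integral_truncatedRidge_le (by positivity) hf hfB hX hX_sq u
      _ ≤ B / (R * finrank ℝ E) * finrank ℝ E := by gcongr
      _ = B / R := by field_simp
  have hsmooth_mean :=
    integral_truncatedRidge_le_integral_integral_add (μ := μ) hδ hK hR.le hf hfB hfK hX u
  have hsmooth := abs_le.1 (abs_integral_truncatedRidge_sub_le hδ hK hR.le hf hfB hfK (X ω) u)
  have htruncate_point :=
    truncatedRidge_le (r := R * finrank ℝ E) (fun t => (hfB t).1) (X ω) u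
  linarith [hsmooth.2]

end Ridge

section UniformLowerBound

variable {Ω E κ : Type*} [MeasurableSpace Ω] {μ : Measure Ω} [NormedAddCommGroup E]
  [InnerProductSpace ℝ E] [FiniteDimensional ℝ E] [Nontrivial E] [MeasurableSpace E]
  [BorelSpace E] [Fintype κ] {X : κ → Ω → E} {f : ℝ → ℝ} {B η K δ R l : ℝ}

lemma log_one_add_one_div_pow_le (hδ : 0 < δ) (d : ℕ) :
    Real.log ((1 + 1 / δ) ^ d) ≤ d / δ := by
  have hlog := Real.log_le_sub_one_of_pos (show 0 < 1 + 1 / δ by positivity)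
  calc Real.log ((1 + 1 / δ) ^ d) = d * Real.log (1 + 1 / δ) := Real.log_pow _ _
    _ ≤ d * (1 / δ) := by gcongr; linarith
    _ = d / δ := mul_one_div _ _

theorem measure_exists_lt_sum_integral_ridge_sub_le (hδ : 0 < δ) (hK : 0 ≤ K) (hR : 0 < R)
    (hl : 0 < l) (hf : Measurable f) (hfB : ∀ t, f t ∈ Icc 0 B)
    (hfK : ∀ s t, |f s - f t| ≤ η + K * (s - t) ^ 2) (hX : iIndepFun X μ)
    (hX_meas : ∀ j, Measurable (X j)) (hX_sq : ∀ j, Integrable (fun ω => ‖X j ω‖ ^ 2) μ)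
    (hX_le : ∀ j, ∫ ω, ‖X j ω‖ ^ 2 ∂μ ≤ finrank ℝ E) (s : ℝ) :
    μ {ω | ∃ u, ‖u‖ ≤ 1 ∧ Fintype.card κ * (B / R + 2 * (η + K * (R * δ ^ 2)) + l * B ^ 2 / 8)
        + (s + finrank ℝ E / δ) / l < ∑ j, (∫ ω', f ⟪X j ω', u⟫ ∂μ - f ⟪X j ω, u⟫)}
      ≤ ENNReal.ofReal (Real.exp (-s)) := by
  have := hX.isProbabilityMeasure
  have hball : ∀ u : {u : E // ‖u‖ ≤ 1}, IsProbabilityMeasure (volume[|ball (u : E) δ]) :=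
    fun _ => isProbabilityMeasure_cond_ball hδ
  have : IsProbabilityMeasure (volume[|ball (0 : E) (1 + δ)]) :=
    isProbabilityMeasure_cond_ball (by positivity)
  refine (measure_mono ?_).trans (measure_exists_lt_sum_integral_sub_le
    (ρ := fun u : {u : E // ‖u‖ ≤ 1} => volume[|ball (u : E) δ]) (by positivity)
    (fun u => cond_ball_le_smul_cond_ball hδ u.2) hX hX_meas
    (measurable_truncatedRidge (r := R * finrank ℝ E) hf) (truncatedRidge_mem_Icc hfB) hl s)
  rintro ω ⟨u, hu, hlt⟩
  refine ⟨⟨u, hu⟩, ?_⟩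
  have hsum := Finset.sum_le_sum fun j (_ : j ∈ Finset.univ) =>
    integral_ridge_sub_le hδ hK hR hf hfB hfK (hX_meas j) (hX_sq j) (hX_le j) u ω
  rw [Finset.sum_add_distrib, Finset.sum_const, Finset.card_univ, nsmul_eq_mul] at hsum
  have hlog : (s + Real.log ((1 + 1 / δ) ^ finrank ℝ E)) / l ≤ (s + finrank ℝ E / δ) / l := by
    gcongr
    exact log_one_add_one_div_pow_le hδ _
  linarith

end UniformLowerBound

section Approximation

lemma exists_hasCompactSupport_nonneg_le_integral_le {α : Type*} [TopologicalSpace α]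
    [NormalSpace α] [R1Space α] [WeaklyLocallyCompactSpace α] [MeasurableSpace α] [BorelSpace α]
    {μ : Measure α} [μ.Regular] {g : α → ℝ} (hg : Continuous g) (hg_nonneg : ∀ x, 0 ≤ g x)
    (hg_int : Integrable g μ) {ε : ℝ} (hε : 0 < ε) :
    ∃ f : α → ℝ, HasCompactSupport f ∧ Continuous f ∧ (∀ x, 0 ≤ f x) ∧ (∀ x, f x ≤ g x) ∧
      ∫ x, g x ∂μ - ε ≤ ∫ x, f x ∂μ := by
  obtain ⟨k, hk_supp, hk_approx, hk, hk_int⟩ :=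
    hg_int.exists_hasCompactSupport_integral_sub_le hε
  set f : α → ℝ := fun x => min (g x) (max (k x) 0)
  have hf : Continuous f := by fun_prop
  have hf_nonneg : ∀ x, 0 ≤ f x := fun x => le_min (hg_nonneg x) (le_max_right _ _)
  have hf_le : ∀ x, f x ≤ g x := fun x => min_le_left _ _
  have hf_int : Integrable f μ := hg_int.mono' hf.aestronglyMeasurable
    (ae_of_all _ fun x => by rw [Real.norm_of_nonneg (hf_nonneg x)]; exact hf_le x)
  refine ⟨f, hk_supp.mono fun x hx hkx => hx ?_, hf, hf_nonneg, hf_le, ?_⟩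
  · simp [f, hkx, hg_nonneg x]
  have hsub : ∀ x, g x - f x ≤ ‖g x - k x‖ := fun x => by
    rw [Real.norm_eq_abs, sub_le_iff_le_add, ← sub_le_iff_le_add']
    refine le_min (by linarith [abs_nonneg (g x - k x)]) (le_max_of_le_left ?_)
    linarith [le_abs_self (g x - k x)]
  have hle := integral_mono (hg_int.sub hf_int) (hg_int.sub hk_int).norm hsub
  simp only [Pi.sub_apply] at hle
  rw [integral_sub hg_int hf_int] at hle
  linarith

lemma exists_forall_dist_le_add_mul_dist_sq {α β : Type*} [PseudoMetricSpace α]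
    [PseudoMetricSpace β] {f : α → β} (hf : UniformContinuous f)
    (hf_bdd : Bornology.IsBounded (range f)) {η : ℝ} (hη : 0 < η) :
    ∃ K ≥ 0, ∀ x y, dist (f x) (f y) ≤ η + K * dist x y ^ 2 := by
  obtain ⟨δ, hδ, hfδ⟩ := Metric.uniformContinuous_iff.1 hf η hη
  set D := diam (range f)
  refine ⟨D / δ ^ 2, div_nonneg diam_nonneg (sq_nonneg δ), fun x y => ?_⟩
  rcases lt_or_ge (dist x y) δ with hxy | hxy
  · exact (hfδ hxy).le.trans (le_add_of_nonneg_right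
      (mul_nonneg (div_nonneg diam_nonneg (sq_nonneg δ)) (sq_nonneg _)))
  · calc dist (f x) (f y) ≤ D :=
          dist_le_diam_of_mem hf_bdd (mem_range_self x) (mem_range_self y)
      _ = D / δ ^ 2 * δ ^ 2 := by field_simp
      _ ≤ D / δ ^ 2 * dist x y ^ 2 := by gcongr
      _ ≤ η + D / δ ^ 2 * dist x y ^ 2 := le_add_of_nonneg_left hη.le

end Approximation

section Gaussian

lemma hasDerivAt_gaussianPDFReal (μ : ℝ) {v : ℝ≥0} (x : ℝ) :
    HasDerivAt (gaussianPDFReal μ v) (-((x - μ) / v) * gaussianPDFReal μ v x) x := by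
  have hexponent : HasDerivAt (fun y : ℝ => -(y - μ) ^ 2 / (2 * v)) (-((x - μ) / v)) x :=
    ((((hasDerivAt_id' x).sub_const μ).pow 2).neg.div_const (2 * (v : ℝ))).congr_deriv
      (by simp only [Nat.cast_ofNat, Nat.add_one_sub_one, pow_one, mul_one]; ring)
  exact (hexponent.exp.const_mul (√(2 * Real.pi * v))⁻¹).congr_deriv
    (by rw [gaussianPDFReal]; ring)

lemma integrable_pow_gaussianReal (k : ℕ) (μ : ℝ) (v : ℝ≥0) :
    Integrable (fun x => x ^ k) (gaussianReal μ v) := by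
  have := (memLp_id_gaussianReal (μ := μ) (v := v) k).integrable_norm_pow'
  exact (integrable_norm_iff (by fun_prop)).1 (by simpa using this)

lemma integrable_pow_mul_gaussianPDFReal (k : ℕ) (μ : ℝ) (v : ℝ≥0) :
    Integrable (fun x => x ^ k * gaussianPDFReal μ v x) := by
  by_cases hv : v = 0
  · simp [hv]
  have := integrable_pow_gaussianReal k μ v
  rw [gaussianReal_of_var_ne_zero _ hv, integrable_withDensity_iff_integrable_smul'
    (measurable_gaussianPDF μ v) (ae_of_all _ fun _ => gaussianPDF_lt_top)] at this
  simpa [mul_comm, toReal_gaussianPDF] using this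

lemma integral_pow_add_two_gaussianReal (k : ℕ) (v : ℝ≥0) :
    ∫ x, x ^ (k + 2) ∂gaussianReal 0 v = (k + 1) * v * ∫ x, x ^ k ∂gaussianReal 0 v := by
  by_cases hv : v = 0
  · simp [hv]
  have hv' : (v : ℝ) ≠ 0 := mod_cast hv
  have hparts := integral_mul_deriv_eq_deriv_mul_of_integrable
    (u := fun x : ℝ => x ^ (k + 1)) (v := gaussianPDFReal 0 v)
    (u' := fun x => (k + 1) * x ^ k) (v' := fun x => -(x / v) * gaussianPDFReal 0 v x)
    (fun x _ => by simpa using hasDerivAt_pow (k + 1) x)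
    (fun x _ => by simpa using hasDerivAt_gaussianPDFReal 0 x)
    (((integrable_pow_mul_gaussianPDFReal (k + 2) 0 v).const_mul (-(v : ℝ)⁻¹)).congr
      (ae_of_all _ fun x => by simp only [neg_mul, Pi.mul_apply, mul_neg, neg_inj]; ring))
    (((integrable_pow_mul_gaussianPDFReal k 0 v).const_mul (k + 1)).congr
      (ae_of_all _ fun x => by simp only [Pi.mul_apply]; ring))
    (integrable_pow_mul_gaussianPDFReal (k + 1) 0 v)
  simp only [integral_gaussianReal_eq_integral_smul hv, smul_eq_mul]
  calc ∫ x, gaussianPDFReal 0 v x * x ^ (k + 2)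
      = -v * ∫ x, x ^ (k + 1) * (-(x / v) * gaussianPDFReal 0 v x) := by
        rw [← integral_const_mul]
        congr with x
        field_simp
        ring
    _ = v * ∫ x, (k + 1) * x ^ k * gaussianPDFReal 0 v x := by rw [hparts]; ring
    _ = (k + 1) * v * ∫ x, gaussianPDFReal 0 v x * x ^ k := by
        rw [← integral_const_mul, ← integral_const_mul]
        congr with x
        ring

lemma integral_pow_four_gaussianReal : ∫ x, x ^ 4 ∂gaussianReal 0 1 = 3 := by
  rw [integral_pow_add_two_gaussianReal 2, integral_pow_add_two_gaussianReal 0]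
  norm_num

variable {E : Type*} [NormedAddCommGroup E] [InnerProductSpace ℝ E] [FiniteDimensional ℝ E]
  [MeasurableSpace E] [BorelSpace E]

lemma measurePreserving_inner_stdGaussian (u : E) :
    MeasurePreserving (fun x => ⟪x, u⟫) (stdGaussian E) (gaussianReal 0 (‖u‖₊ ^ 2)) := by
  refine ⟨by fun_prop, ?_⟩
  have hmap := IsGaussian.map_eq_gaussianReal (μ := stdGaussian E) (innerSL ℝ u)
  rw [integral_strongDual_stdGaussian, variance_dual_stdGaussian, innerSL_apply_norm,
    Real.toNNReal_pow (norm_nonneg u), norm_toNNReal] at hmap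
  rw [← hmap]
  congr! 2 with x
  exact real_inner_comm _ _

lemma integrable_sq_norm_stdGaussian :
    Integrable (fun x => ‖x‖ ^ 2) (stdGaussian E) :=
  IsGaussian.memLp_two_id.integrable_norm_pow (by norm_num)

lemma integral_sq_norm_stdGaussian : ∫ x, ‖x‖ ^ 2 ∂stdGaussian E = finrank ℝ E := by
  set b := stdOrthonormalBasis ℝ E
  have hlaw : ∀ i, MeasurePreserving (fun x => ⟪x, b i⟫) (stdGaussian E) (gaussianReal 0 1) :=
    fun i => by simpa using measurePreserving_inner_stdGaussian (b i)
  have hint : ∀ i, Integrable (fun x => ⟪x, b i⟫ ^ 2) (stdGaussian E) := fun i =>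
    (hlaw i).integrable_comp_of_integrable (integrable_pow_gaussianReal 2 0 1)
  have hcoord : ∀ i, ∫ x, ⟪x, b i⟫ ^ 2 ∂stdGaussian E = 1 := fun i => by
    have hsq : ∫ y, y ^ 2 ∂gaussianReal 0 1 = 1 := by
      simpa using integral_pow_add_two_gaussianReal 0 1
    rw [← hsq, ← (hlaw i).map_eq, integral_map (by fun_prop) (by fun_prop)]
  simp_rw [← b.sum_sq_inner_left]
  rw [integral_finsetSum _ fun i _ => hint i]
  simp [hcoord]

end Gaussian

section StdGaussianMat

variable {m n : ℕ}

lemma measurePreserving_row_stdGaussianMat (j : Fin m) :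
    MeasurePreserving (fun a => WithLp.toLp 2 (a j)) (stdGaussianMat m n)
      (stdGaussian (EuclideanSpace ℝ (Fin n))) :=
  (⟨by fun_prop, map_pi_eq_stdGaussian⟩ : MeasurePreserving (WithLp.toLp 2)
    (Measure.pi fun _ => gaussianReal 0 1) (stdGaussian (EuclideanSpace ℝ (Fin n)))).comp
    (measurePreserving_eval (fun _ => Measure.pi fun _ => gaussianReal 0 1) j)

lemma iIndepFun_row_stdGaussianMat :
    iIndepFun (fun (j : Fin m) a => WithLp.toLp 2 (a j)) (stdGaussianMat m n) :=
  iIndepFun_pi (X := fun _ => WithLp.toLp 2) fun _ => by fun_prop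

lemma stdGaussianMat_exists_lt_sum_le {f : ℝ → ℝ} {B η K δ R l : ℝ} (hδ : 0 < δ)
    (hK : 0 ≤ K) (hR : 0 < R) (hl : 0 < l) (hf : Measurable f) (hfB : ∀ t, f t ∈ Icc 0 B)
    (hfK : ∀ s t, |f s - f t| ≤ η + K * (s - t) ^ 2) (s : ℝ) :
    stdGaussianMat m n {a | ∃ u : Fin n → ℝ, ∑ i, u i ^ 2 = 1 ∧
        m * (B / R + 2 * (η + K * (R * δ ^ 2)) + l * B ^ 2 / 8) + (s + n / δ) / l
          < ∑ j, (∫ t, f t ∂gaussianReal 0 1 - f (∑ i, a j i * u i))}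
      ≤ ENNReal.ofReal (Real.exp (-s)) := by
  rcases eq_or_ne n 0 with rfl | hn
  · simp
  have : NeZero n := ⟨hn⟩
  have hrow := measurePreserving_row_stdGaussianMat (m := m) (n := n)
  have hsq : ∀ j, ∫ a, ‖WithLp.toLp 2 (a j)‖ ^ 2 ∂stdGaussianMat m n
      ≤ finrank ℝ (EuclideanSpace ℝ (Fin n)) := fun j => by
    rw [← integral_sq_norm_stdGaussian, ← (hrow j).map_eq,
      integral_map (hrow j).aemeasurable (by fun_prop)]
  refine (measure_mono ?_).trans (measure_exists_lt_sum_integral_ridge_sub_le hδ hK hR hl hf hfB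
    hfK iIndepFun_row_stdGaussianMat (fun j => (hrow j).measurable)
    (fun j => (hrow j).integrable_comp_of_integrable integrable_sq_norm_stdGaussian) hsq s)
  rintro a ⟨u, hu, hlt⟩
  have hu_nnnorm : ‖WithLp.toLp 2 u‖₊ = 1 := by
    rw [← NNReal.coe_inj, coe_nnnorm]
    simp [EuclideanSpace.norm_eq, hu]
  have hinner : ∀ j, ⟪WithLp.toLp 2 (a j), WithLp.toLp 2 u⟫ = ∑ i, a j i * u i := fun j => by
    simp [PiLp.inner_apply, mul_comm]
  have hmean : ∀ j, ∫ a, f ⟪WithLp.toLp 2 (a j), WithLp.toLp 2 u⟫ ∂stdGaussianMat m n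
      = ∫ t, f t ∂gaussianReal 0 1 := fun j => by
    have hlaw := (measurePreserving_inner_stdGaussian (WithLp.toLp 2 u)).comp (hrow j)
    rw [hu_nnnorm, one_pow] at hlaw
    rw [← hlaw.map_eq, integral_map hlaw.aemeasurable hf.aestronglyMeasurable]
    rfl
  refine ⟨WithLp.toLp 2 u, hu_nnnorm.le, ?_⟩
  simpa [hmean, hinner] using hlt

lemma exists_deviation_parameters {ε B K : ℝ} (hε : 0 < ε) (hB : 0 < B) (hK : 0 ≤ K) :
    ∃ R > 0, ∃ δ > 0, ∃ l > 0, ∃ C > 0, ∃ c > 0, ∀ m d : ℝ, 0 ≤ m → C * d ≤ m →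
      m * (B / R + 2 * (ε / 8 + K * (R * δ ^ 2)) + l * B ^ 2 / 8) + (c * m + d / δ) / l
        ≤ m * ε := by
  set R := 8 * B / ε with hR
  set δ := √(ε / (16 * (K + 1) * R)) with hδ
  set l := ε / B ^ 2 with hl
  have hR_pos : 0 < R := by positivity
  have hδ_pos : 0 < δ := by positivity
  have hl_pos : 0 < l := by positivity
  refine ⟨R, hR_pos, δ, hδ_pos, l, hl_pos, 8 / (δ * l * ε), by positivity, l * ε / 8,
    by positivity, fun m d hm hmd => ?_⟩
  have htruncation : B / R = ε / 8 := by rw [hR]; field_simp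
  have hsmoothing : K * (R * δ ^ 2) ≤ ε / 16 := by
    rw [hδ, Real.sq_sqrt (by positivity)]
    calc K * (R * (ε / (16 * (K + 1) * R))) = K / (K + 1) * (ε / 16) := by field_simp
      _ ≤ 1 * (ε / 16) := by gcongr; exact (div_le_one (by positivity)).2 (by linarith)
      _ = ε / 16 := one_mul _
  have hvariance : l * B ^ 2 / 8 = ε / 8 := by rw [hl]; field_simp
  have hdimension : d / δ / l ≤ m * (ε / 8) := by
    calc d / δ / l = 8 / (δ * l * ε) * d * (ε / 8) := by field_simp
      _ ≤ m * (ε / 8) := by gcongr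
  have hconfidence : l * ε / 8 * m / l = m * (ε / 8) := by field_simp
  rw [htruncation, hvariance, add_div, hconfidence]
  nlinarith

lemma exists_stdGaussianMat_exists_lt_sum_le {f : ℝ → ℝ} (hf : UniformContinuous f)
    (hf_nonneg : ∀ t, 0 ≤ f t) (hf_bdd : Bornology.IsBounded (range f)) {ε : ℝ} (hε : 0 < ε) :
    ∃ C > (0 : ℝ), ∃ c > (0 : ℝ), ∀ n m : ℕ, C * n ≤ m →
      stdGaussianMat m n {a | ∃ u : Fin n → ℝ, ∑ i, u i ^ 2 = 1 ∧
          m * ε < ∑ j, (∫ t, f t ∂gaussianReal 0 1 - f (∑ i, a j i * u i))}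
        ≤ ENNReal.ofReal (Real.exp (-(c * m))) := by
  obtain ⟨B, hB, hfB⟩ := hf_bdd.exists_pos_norm_le
  have hfB_mem : ∀ t, f t ∈ Icc 0 B := fun t =>
    ⟨hf_nonneg t, (le_abs_self _).trans (hfB _ (mem_range_self t))⟩
  obtain ⟨K, hK, hfK⟩ := exists_forall_dist_le_add_mul_dist_sq hf hf_bdd (by positivity : 0 < ε / 8)
  have hfK_abs : ∀ s t, |f s - f t| ≤ ε / 8 + K * (s - t) ^ 2 := fun s t => by
    simpa only [Real.dist_eq, sq_abs] using hfK s t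
  obtain ⟨R, hR, δ, hδ, l, hl, C, hC, c, hc, hparam⟩ := exists_deviation_parameters hε hB hK
  refine ⟨C, hC, c, hc, fun n m hm => (measure_mono ?_).trans
    (stdGaussianMat_exists_lt_sum_le hδ hK hR hl hf.continuous.measurable hfB_mem hfK_abs (c * m))⟩
  rintro a ⟨u, hu, hlt⟩
  exact ⟨u, hu, (hparam m n m.cast_nonneg hm).trans_lt hlt⟩

lemma ofReal_one_sub_le_of_measure_compl_le {α : Type*} [MeasurableSpace α] {μ : Measure α}
    [IsProbabilityMeasure μ] {s : Set α} {p : ℝ} (hp : 0 ≤ p) (hs : μ sᶜ ≤ ENNReal.ofReal p) :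
    ENNReal.ofReal (1 - p) ≤ μ s := by
  rw [ENNReal.ofReal_sub _ hp, ENNReal.ofReal_one, tsub_le_iff_right, ← measure_univ (μ := μ)]
  exact (measure_univ_le_add_compl s).trans (by gcongr)

theorem fourth_moment_lower_bound_general {g : ℝ → ℝ} (hg : Continuous g)
    (hg_nonneg : ∀ t, 0 ≤ g t) (hg_int : Integrable g (gaussianReal 0 1)) {ε : ℝ} (hε : 0 < ε) :
    ∃ C > (0 : ℝ), ∃ c > (0 : ℝ), ∀ n m : ℕ, (m : ℝ) ≥ C * n →
      stdGaussianMat m n {a | ∀ u : Fin n → ℝ, ∑ i, (u i) ^ 2 = 1 →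
          (1 / (m : ℝ)) * ∑ j, g (∑ i, a j i * u i) ≥ ∫ t, g t ∂gaussianReal 0 1 - ε}
        ≥ ENNReal.ofReal (1 - Real.exp (-(c * m))) := by
  obtain ⟨f, hf_supp, hf, hf_nonneg, hfg, hf_int⟩ :=
    exists_hasCompactSupport_nonneg_le_integral_le hg hg_nonneg hg_int (half_pos hε)
  obtain ⟨C, hC, c, hc, hdev⟩ := exists_stdGaussianMat_exists_lt_sum_le
    (hf_supp.uniformContinuous_of_continuous hf) hf_nonneg
    (hf_supp.isCompact_range hf).isBounded (half_pos hε)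
  refine ⟨C, hC, c, hc, fun n m hm => ?_⟩
  set good := {a : Fin m → Fin n → ℝ | ∀ u : Fin n → ℝ, ∑ i, (u i) ^ 2 = 1 →
    (1 / (m : ℝ)) * ∑ j, g (∑ i, a j i * u i) ≥ ∫ t, g t ∂gaussianReal 0 1 - ε} with hgood
  have hbad : stdGaussianMat m n goodᶜ ≤ ENNReal.ofReal (Real.exp (-(c * m))) := by
    refine (measure_mono fun a ha => ?_).trans (hdev n m hm)
    simp only [hgood, mem_compl_iff, mem_ofPred_eq, not_forall, not_le, ge_iff_le] at ha
    obtain ⟨u, hu, hlt⟩ := ha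
    refine ⟨u, hu, ?_⟩
    have hn : 0 < n := Nat.pos_of_ne_zero fun h => by subst h; simp at hu
    have hm_pos : (0 : ℝ) < m := lt_of_lt_of_le (by positivity) hm
    rw [one_div, inv_mul_lt_iff₀ hm_pos] at hlt
    have hsum : ∑ j, f (∑ i, a j i * u i) ≤ ∑ j, g (∑ i, a j i * u i) :=
      Finset.sum_le_sum fun j _ => hfg _
    rw [Finset.sum_sub_distrib, Finset.sum_const, Finset.card_univ, Fintype.card_fin, nsmul_eq_mul]
    linarith [mul_le_mul_of_nonneg_left hf_int hm_pos.le]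
  have : IsProbabilityMeasure (stdGaussianMat m n) := by unfold stdGaussianMat; infer_instance
  exact ofReal_one_sub_le_of_measure_compl_le (Real.exp_pos _).le hbad

end StdGaussianMat

/-- For any `0 < ε ≤ 1/2` there exist `C(ε), c(ε) > 0` such that if `m ≥ C(ε) n`,
then with probability at least `1 − 3exp(−c(ε)m)`, `(1/m)∑ⱼ(aⱼᵀu)⁴ ≥ 3 − ε` for
all unit vectors `u`. -/
theorem fourth_moment_lower_bound :
    ∀ ε : ℝ, 0 < ε → ε ≤ 1 / 2 → ∃ C > (0 : ℝ), ∃ c > (0 : ℝ), ∀ n m : ℕ,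
      (m : ℝ) ≥ C * n →
      stdGaussianMat m n {a | ∀ u : Fin n → ℝ, ∑ i, (u i) ^ 2 = 1 →
          (1 / (m : ℝ)) * ∑ j, (∑ i, a j i * u i) ^ 4 ≥ 3 - ε}
        ≥ ENNReal.ofReal (1 - 3 * Real.exp (-(c * m))) := by
  intro ε hε _
  obtain ⟨C, hC, c, hc, hbound⟩ := fourth_moment_lower_bound_general (g := fun t => t ^ 4)
    (by fun_prop) (fun t => by positivity) (integrable_pow_gaussianReal 4 0 1) hε
  refine ⟨C, hC, c, hc, fun n m hm => ?_⟩
  rw [integral_pow_four_gaussianReal] at hbound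
  exact (ENNReal.ofReal_le_ofReal (by linarith [Real.exp_pos (-(c * m))])).trans (hbound n m hm)
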